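/- arXiv:2311.03594 — 8 statements merged into one kernel-verified Lean document; each statement's English description precedes it below -/
import Mathlib

section
/- Let g : [a,b] → [a,b] be a continuous map with a < b for which there exists m ∈ (a,b) such that g is strictly increasing on [a,m] and strictly decreasing on [m,b], and such that g(a) ≥ a, g(b) < b, and g(x) > x for all x ∈ (a,m]. Let Π = {x ∈ [m,b] : g(x) ∈ [m,b] and g(g(x)) = x}. Then g has a periodic point of odd minimal period at least 3 if and only if g(g(m)) < m and g(g(g(m))) < inf Π. -/
open Set Function

/-- On an invariant interval where `g` is decreasing, periodic points satisfy `g (g w) = w`. -/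
lemma aux_antitone (g : ℝ → ℝ) (S : Set ℝ) (hS : MapsTo g S S) (ha : StrictAntiOn g S)
    (w : ℝ) (hw : w ∈ S) (n : ℕ) (hn : 0 < n) (hp : g^[n] w = w) : g (g w) = w := by
  have hin : ∀ j, (fun x => g (g x))^[j] w ∈ S := by
    intro j
    induction j with
    | zero => exact hw
    | succ j ih => rw [iterate_succ_apply']; exact hS (hS ih)
  have hmon : ∀ x ∈ S, ∀ y ∈ S, x < y → g (g x) < g (g y) := fun x hx y hy h =>
    ha (hS hy) (hS hx) (ha hx hy h)
  have hper : (fun x => g (g x))^[n] w = w := by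
    have : (fun x => g (g x)) = g^[2] := rfl
    rw [this, ← iterate_mul, mul_comm, iterate_mul]
    have h1 : IsPeriodicPt g n w := hp
    have h2 := h1.mul_const 2
    rw [← iterate_mul]
    exact h2
  obtain ⟨k, rfl⟩ : ∃ k, n = k + 1 := ⟨n - 1, by omega⟩
  rcases lt_trichotomy (g (g w)) w with h | h | h
  · exfalso
    have : ∀ j, (fun x => g (g x))^[j + 1] w < w := by
      intro j
      induction j with
      | zero => exact h
      | succ j ih =>
        rw [iterate_succ_apply']
        exact (hmon _ (hin _) _ hw ih).trans h
    exact absurd hper (this k).ne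
  · exact h
  · exfalso
    have : ∀ j, w < (fun x => g (g x))^[j + 1] w := by
      intro j
      induction j with
      | zero => exact h
      | succ j ih =>
        rw [iterate_succ_apply']
        exact h.trans (hmon _ hw _ (hin _) ih)
    exact absurd hper (this k).ne.symm

/-- Deng–Khan–Mitra: for a unimodal map `g` of `[a,b]` as below, `g` has a periodic
point of odd minimal period at least 3 iff `g²(m) < m` and `g³(m) < inf Π`. -/
theorem odd_period_cycle_iff
    (a b m : ℝ) (g : ℝ → ℝ)
    (hab : a < b)
    (hcont : ContinuousOn g (Set.Icc a b))
    (hmaps : Set.MapsTo g (Set.Icc a b) (Set.Icc a b))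
    (hm : m ∈ Set.Ioo a b)
    (hmono : StrictMonoOn g (Set.Icc a m))
    (hanti : StrictAntiOn g (Set.Icc m b))
    (hga : g a ≥ a)
    (hgb : g b < b)
    (habove : ∀ x ∈ Set.Ioc a m, g x > x) :
    (∃ x ∈ Set.Icc a b,
        Odd (Function.minimalPeriod g x) ∧ 3 ≤ Function.minimalPeriod g x) ↔
      g (g m) < m ∧
        g (g (g m)) <
          sInf {x | x ∈ Set.Icc m b ∧ g x ∈ Set.Icc m b ∧ g (g x) = x} := by
  obtain ⟨ham, hmb⟩ := hm
  have hgm : m < g m := habove m ⟨ham, le_rfl⟩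
  have hmI : m ∈ Icc a b := ⟨ham.le, hmb.le⟩
  have hMI : g m ∈ Icc a b := hmaps hmI
  have hcI : g (g m) ∈ Icc a b := hmaps hMI
  have hmax : ∀ x ∈ Icc a b, g x ≤ g m := by
    intro x hx
    rcases le_total x m with h | h
    · exact hmono.monotoneOn ⟨hx.1, h⟩ ⟨ham.le, le_rfl⟩ h
    · exact hanti.antitoneOn ⟨le_rfl, hmb.le⟩ ⟨h, hx.2⟩ h
  have hsub : Icc m b ⊆ Icc a b := Icc_subset_Icc_left ham.le
  have hgg : ContinuousOn (fun x => g (g x)) (Icc a b) := hcont.comp hcont hmaps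
  set P := {x | x ∈ Set.Icc m b ∧ g x ∈ Set.Icc m b ∧ g (g x) = x} with hP
  -- Π is closed
  have hPclosed : IsClosed P := by
    have h1 : IsClosed (Icc m b ∩ g ⁻¹' Icc m b) :=
      (hcont.mono hsub).preimage_isClosed_of_isClosed isClosed_Icc isClosed_Icc
    have h2 : IsClosed (Icc a b ∩ (fun x => g (g x) - x) ⁻¹' {0}) :=
      (hgg.sub continuousOn_id).preimage_isClosed_of_isClosed isClosed_Icc isClosed_singleton
    have : P = (Icc m b ∩ g ⁻¹' Icc m b) ∩ (Icc a b ∩ (fun x => g (g x) - x) ⁻¹' {0}) := by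
      ext x
      simp only [hP, mem_ofPred_eq, mem_inter_iff, mem_preimage, mem_singleton_iff, sub_eq_zero]
      constructor
      · rintro ⟨h1, h2, h3⟩
        exact ⟨⟨h1, h2⟩, hsub h1, h3⟩
      · rintro ⟨⟨h1, h2⟩, _, h3⟩
        exact ⟨h1, h2, h3⟩
    rw [this]
    exact h1.inter h2
  have hPne : P.Nonempty := by
    have hc : ContinuousOn (fun x => g x - x) (Icc m b) :=
      (hcont.mono hsub).sub continuousOn_id
    have := intermediate_value_Icc' hmb.le hc
    obtain ⟨z, hz, hz0⟩ := this (show (0:ℝ) ∈ Icc (g b - b) (g m - m) from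
      ⟨by linarith, by linarith⟩)
    have hzz : g z = z := by simpa [sub_eq_zero] using hz0
    exact ⟨z, hz, by rw [hzz]; exact hz, by rw [hzz, hzz]⟩
  have hPbdd : BddBelow P := ⟨m, fun x hx => hx.1.1⟩
  have hpP : sInf P ∈ P := hPclosed.csInf_mem hPne hPbdd
  have hple : ∀ x ∈ P, sInf P ≤ x := fun x hx => csInf_le hPbdd hx
  generalize sInf P = p at hpP hple
  obtain ⟨hpI, hqI, hgp⟩ := hpP
  have hpq : p ≤ g p := hple _ ⟨hqI, by rw [hgp]; exact hpI, by rw [hgp]⟩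
  have hpM : p ≤ g m := by
    rw [← hgp]; exact hmax _ (hsub hqI)
  constructor
  · rintro ⟨x, hx, hodd, h3⟩
    generalize hn : minimalPeriod g x = n at hodd h3
    have hper : IsPeriodicPt g n x := hn ▸ isPeriodicPt_minimalPeriod g x
    have hn0 : 0 < n := by omega
    have hmem : ∀ j, g^[j] x ∈ Icc a b := fun j => hmaps.iterate j hx
    have hperj : ∀ j, g^[n] (g^[j] x) = g^[j] x := fun j => hper.apply_iterate j
    have hno2 : ∀ j, g (g (g^[j] x)) ≠ g^[j] x := by
      intro j hj
      have h2 : IsPeriodicPt g 2 (g^[j] x) := hj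
      have h4 := h2.minimalPeriod_le (by norm_num)
      rw [minimalPeriod_apply_iterate (mk_mem_periodicPts hn0 hper), hn] at h4
      omega
    have hleM : ∀ j, g^[j] x ≤ g m := by
      intro j
      obtain ⟨k, rfl⟩ : ∃ k, n = k + 1 := ⟨n - 1, by omega⟩
      have := hperj j
      rw [iterate_succ_apply', ← iterate_add_apply] at this
      rw [← this]
      exact hmax _ (hmem _)
    -- some orbit element is at least m
    obtain ⟨i, hi⟩ : ∃ i, m < g^[i] x := by
      by_contra! hcon
      have hx1 : x < g x := by
        rcases hx.1.eq_or_lt with h | h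
        · refine lt_of_le_of_ne (h ▸ hga) ?_
          intro he
          exact hno2 0 (by simp [← he])
        · exact habove x ⟨h, hcon 0⟩
      have : ∀ k, x < g^[k + 1] x := by
        intro k
        induction k with
        | zero => exact hx1
        | succ k ih =>
          rw [iterate_succ_apply']
          exact ih.trans (habove _ ⟨hx.1.trans_lt ih, hcon _⟩)
      obtain ⟨k, rfl⟩ : ∃ k, n = k + 1 := ⟨n - 1, by omega⟩
      exact absurd hper (this k).ne.symm
    -- key: no orbit element in an invariant subinterval of [m,b]
    have hkey : ∀ l u, m ≤ l → u ≤ b → MapsTo g (Icc l u) (Icc l u) →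
        ∀ j, g^[j] x ∉ Icc l u := by
      intro l u hl hu hS j hj
      exact hno2 j (aux_antitone g _ hS (hanti.mono (Icc_subset_Icc hl hu)) _ hj n hn0 (hperj j))
    have hc : g (g m) < m := by
      by_contra! hcm
      refine hkey m (g m) le_rfl hMI.2 ?_ i ⟨hi.le, hleM i⟩
      intro y hy
      have hyb : y ≤ b := hy.2.trans hMI.2
      exact ⟨hcm.trans (hanti.antitoneOn ⟨hy.1, hyb⟩ ⟨hgm.le, hMI.2⟩ hy.2),
        hmax y ⟨ham.le.trans hy.1, hyb⟩⟩
    refine ⟨hc, ?_⟩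
    by_contra! hcp
    have hno := hkey p (g p) hpI.1 hqI.2 (by
      intro y hy
      have hyI : y ∈ Icc m b := ⟨hpI.1.trans hy.1, hy.2.trans hqI.2⟩
      refine ⟨?_, hanti.antitoneOn hpI hyI hy.1⟩
      have := hanti.antitoneOn hyI hqI hy.2
      rwa [hgp] at this)
    -- alternation
    have hA : ∀ j, g (g m) ≤ g^[j] x → g^[j] x < p → g p < g^[j + 1] x := by
      intro j h1 h2
      have hge : p ≤ g^[j + 1] x := by
        rw [iterate_succ_apply']
        rcases le_total (g^[j] x) m with h | h
        · exact hcp.trans (hmono.monotoneOn ⟨hcI.1, hc.le⟩ ⟨(hmem j).1, h⟩ h1)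
        · exact hpq.trans (hanti.antitoneOn ⟨h, (hmem j).2⟩ hpI h2.le)
      by_contra! h
      exact hno _ ⟨hge, h⟩
    have hB : ∀ j, g p < g^[j] x → g (g m) ≤ g^[j + 1] x ∧ g^[j + 1] x < p := by
      intro j h1
      have hjI : g^[j] x ∈ Icc m b := ⟨hqI.1.trans h1.le, (hmem j).2⟩
      rw [iterate_succ_apply']
      refine ⟨hanti.antitoneOn hjI ⟨hgm.le, hMI.2⟩ (hleM j), ?_⟩
      have := hanti hqI hjI h1
      rwa [hgp] at this
    obtain ⟨i', h1, h2⟩ : ∃ i', g (g m) ≤ g^[i'] x ∧ g^[i'] x < p := by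
      rcases lt_or_ge (g^[i] x) p with h | h
      · exact ⟨i, (hc.trans hi).le, h⟩
      · refine ⟨i + 1, hB i ?_⟩
        by_contra! h'
        exact hno _ ⟨h, h'⟩
    have hall : ∀ k, g (g m) ≤ g^[i' + 2 * k] x ∧ g^[i' + 2 * k] x < p := by
      intro k
      induction k with
      | zero => exact ⟨h1, h2⟩
      | succ k ih => exact hB _ (hA _ ih.1 ih.2)
    obtain ⟨k, hk⟩ := hodd
    have h5 := hA _ (hall k).1 (hall k).2
    have h6 := hperj i'
    rw [← iterate_add_apply, show n + i' = i' + 2 * k + 1 by omega] at h6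
    rw [h6] at h5
    linarith
  · rintro ⟨hc, hcp⟩
    have hmpsub : Icc m p ⊆ Icc a b := Icc_subset_Icc ham.le hpI.2
    have hgge : ∀ x ∈ Icc m p, g x ∈ Icc m b := fun x hx =>
      ⟨hqI.1.trans (hanti.antitoneOn ⟨hx.1, hx.2.trans hpI.2⟩ hpI hx.2), (hmaps (hmpsub hx)).2⟩
    have hfixp : ∀ x ∈ Icc m p, g (g x) = x → x = p := fun x hx h =>
      le_antisymm hx.2 (hple x ⟨⟨hx.1, hx.2.trans hpI.2⟩, hgge x hx, h⟩)
    have hle : ∀ x ∈ Icc m p, g (g x) ≤ x := by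
      intro x hx
      by_contra! h
      have hcc : ContinuousOn (fun x => g (g x) - x) (Icc m x) :=
        ((hgg.sub continuousOn_id).mono hmpsub).mono (Icc_subset_Icc_right hx.2)
      obtain ⟨t, ht, ht0⟩ := intermediate_value_Icc hx.1 hcc
        (show (0:ℝ) ∈ Icc (g (g m) - m) (g (g x) - x) from ⟨by linarith, by linarith⟩)
      have ht1 : g (g t) = t := by simpa [sub_eq_zero] using ht0
      have ht2 := hfixp t ⟨ht.1, ht.2.trans hx.2⟩ ht1
      have : x = p := le_antisymm hx.2 (ht2 ▸ ht.2)
      rw [this, hgp] at h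
      exact lt_irrefl _ h
    have hex : ∀ v : Icc m p, ∃ w : Icc m p, g (g w) = v := by
      rintro ⟨v, hv⟩
      obtain ⟨t, ht, ht0⟩ := intermediate_value_Icc hpI.1 (hgg.mono hmpsub)
        (show v ∈ Icc (g (g m)) (g (g p)) from ⟨hc.le.trans hv.1, by rw [hgp]; exact hv.2⟩)
      exact ⟨⟨t, ht⟩, ht0⟩
    choose φ hφ using hex
    let w : ℕ → ℝ := fun k => (φ^[k] ⟨m, le_rfl, hpI.1⟩ : Icc m p)
    have hwI : ∀ k, w k ∈ Icc m p := fun k => (φ^[k] ⟨m, le_rfl, hpI.1⟩ : Icc m p).2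
    have hw0 : w 0 = m := rfl
    have hws : ∀ k, g (g (w (k + 1))) = w k := by
      intro k
      simp only [w]
      rw [iterate_succ_apply']
      exact hφ _
    have hwm : Monotone w := monotone_nat_of_le_succ fun k => by
      rw [← hws k]; exact hle _ (hwI _)
    have hit : ∀ k, g^[2 * k] (w k) = m := by
      intro k
      induction k with
      | zero => exact hw0
      | succ k ih =>
        rw [show 2 * (k + 1) = 2 * k + 1 + 1 by ring, iterate_succ_apply, iterate_succ_apply, hws]
        exact ih
    obtain ⟨k, hk⟩ : ∃ k, g (g (g m)) < w k := by
      by_contra! hcon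
      have hbdd : BddAbove (range w) := ⟨p, by rintro _ ⟨k, rfl⟩; exact (hwI k).2⟩
      have hlim := tendsto_atTop_ciSup hwm hbdd
      have hL : (⨆ i, w i) ∈ Icc m p :=
        isClosed_Icc.mem_of_tendsto hlim (Filter.Eventually.of_forall hwI)
      have hLle : (⨆ i, w i) ≤ g (g (g m)) := ciSup_le hcon
      generalize (⨆ i, w i) = L at hlim hL hLle
      have h1 : Filter.Tendsto (fun k => g (g (w (k + 1)))) Filter.atTop (nhds (g (g L))) := by
        have := (hgg L (hmpsub hL)).tendsto
        refine this.comp (tendsto_nhdsWithin_iff.2 ⟨hlim.comp (Filter.tendsto_add_atTop_nat 1), ?_⟩)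
        exact Filter.Eventually.of_forall fun k => hmpsub (hwI _)
      simp only [hws] at h1
      have := hfixp L hL (tendsto_nhds_unique h1 hlim)
      linarith
    have hpre : ∀ v, g (g (g m)) ≤ v → v ≤ p → ∃ y ∈ Icc (g (g m)) m, g y = v := by
      intro v h1 h2
      exact intermediate_value_Icc hc.le (hcont.mono (Icc_subset_Icc hcI.1 hmb.le))
        ⟨h1, h2.trans hpM⟩
    have hkk : w k ≤ w (k + 1) := hwm (Nat.le_succ k)
    obtain ⟨y0, hy0, hgy0⟩ := hpre (w k) hk.le (hwI k).2
    obtain ⟨y1, hy1, hgy1⟩ := hpre (w (k + 1)) (hk.le.trans hkk) (hwI _).2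
    have hm0 : y0 ∈ Icc a m := ⟨hcI.1.trans hy0.1, hy0.2⟩
    have hm1 : y1 ∈ Icc a m := ⟨hcI.1.trans hy1.1, hy1.2⟩
    have h01 : y0 ≤ y1 := (hmono.le_iff_le hm0 hm1).1 (by rw [hgy0, hgy1]; exact hkk)
    have hcit : ∀ j, ContinuousOn g^[j] (Icc a b) := fun j => hcont.iterate hmaps j
    have hcc : ContinuousOn (fun x => g^[2 * (k + 1) + 1] x - x) (Icc y0 y1) :=
      ((hcit _).sub continuousOn_id).mono (Icc_subset_Icc hm0.1 (hm1.2.trans hmb.le))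
    have e0 : g^[2 * (k + 1) + 1] y0 = g (g m) := by
      rw [iterate_succ_apply, hgy0, show 2 * (k + 1) = 2 * k + 1 + 1 by ring,
        iterate_succ_apply', iterate_succ_apply', hit]
    have e1 : g^[2 * (k + 1) + 1] y1 = m := by
      rw [iterate_succ_apply, hgy1, hit]
    obtain ⟨y, hy, hyy⟩ := intermediate_value_Icc h01 hcc
      (show (0:ℝ) ∈ Icc _ _ from ⟨by rw [e0]; linarith [hy0.1], by rw [e1]; linarith [hy1.2]⟩)
    have hper : IsPeriodicPt g (2 * (k + 1) + 1) y := by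
      have : g^[2 * (k + 1) + 1] y - y = 0 := hyy
      exact sub_eq_zero.1 this
    have hyam : y ∈ Icc a m := ⟨hm0.1.trans hy.1, hy.2.trans hm1.2⟩
    have hodd : Odd (minimalPeriod g y) :=
      Odd.of_dvd_nat ⟨k + 1, rfl⟩ hper.minimalPeriod_dvd
    refine ⟨y, ⟨hyam.1, hyam.2.trans hmb.le⟩, hodd, ?_⟩
    have hne1 : minimalPeriod g y ≠ 1 := by
      intro h
      have hfix : g y = y := minimalPeriod_eq_one_iff_isFixedPt.1 h
      have h1 : w k ≤ g y := by
        rw [← hgy0]; exact hmono.monotoneOn hm0 hyam hy.1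
      have h2 := (hwI k).1
      have : y = m := le_antisymm hyam.2 (by linarith)
      rw [this] at hfix
      linarith
    obtain ⟨r, hr⟩ := hodd
    omega
end

section
/- Let g : [a,b] → [a,b] be a continuous map with a < b for which there exists m ∈ (a,b) such that g is strictly increasing on [a,m] and strictly decreasing on [m,b], and such that g(a) ≥ a, g(b) < b, and g(x) > x for all x ∈ (a,m]. Let Π = {x ∈ [m,b] : g(x) ∈ [m,b] and g(g(x)) = x}. Then the second iterate g² is turbulent if and only if g(g(m)) < m and g(g(g(m))) ≤ sup Π. -/
/-- A continuous self-map `h` of the interval `[a,b]` is turbulent if there are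
points `x₁, x₂, x₃` in `[a,b]` with `h x₂ = h x₁ = x₁`, `h x₃ = x₂`, and either
`x₁ < x₃ < x₂` or `x₂ < x₃ < x₁`. -/
def Turbulent (a b : ℝ) (h : ℝ → ℝ) : Prop :=
  ∃ x₁ ∈ Set.Icc a b, ∃ x₂ ∈ Set.Icc a b, ∃ x₃ ∈ Set.Icc a b,
    h x₂ = x₁ ∧ h x₁ = x₁ ∧ h x₃ = x₂ ∧
      ((x₁ < x₃ ∧ x₃ < x₂) ∨ (x₂ < x₃ ∧ x₃ < x₁))

theorem pi_max
    (a b m : ℝ) (g : ℝ → ℝ)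
    (hcont : ContinuousOn g (Set.Icc a b))
    (hm : m ∈ Set.Ioo a b)
    (hanti : StrictAntiOn g (Set.Icc m b))
    (hgb : g b < b)
    (hgm : m < g m) :
    ∃ p, p = sSup {x | x ∈ Set.Icc m b ∧ g x ∈ Set.Icc m b ∧ g (g x) = x} ∧
      m ≤ p ∧ p ≤ b ∧ m ≤ g p ∧ g p ≤ p ∧ g (g p) = p ∧
      ∀ x, m ≤ x → x ≤ b → m ≤ g x → g x ≤ b → g (g x) = x → x ≤ p := by
  obtain ⟨ham, hmb⟩ := hm
  have hcm : ContinuousOn g (Set.Icc m b) := hcont.mono (Set.Icc_subset_Icc_left ham.le)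
  set S := {x | x ∈ Set.Icc m b ∧ g x ∈ Set.Icc m b ∧ g (g x) = x} with hS
  have hbdd : BddAbove S := ⟨b, fun x hx => hx.1.2⟩
  obtain ⟨z, hz, hz0⟩ : ∃ z ∈ Set.Icc m b, g z - z = 0 := by
    have h := intermediate_value_Icc' hmb.le (hcm.sub continuousOn_id)
    obtain ⟨z, hz, h0⟩ := h (show (0:ℝ) ∈ _ from ⟨by simp; linarith, by simp; linarith⟩)
    exact ⟨z, hz, by simpa using h0⟩
  have hzz : g z = z := by linarith
  have hzS : z ∈ S := ⟨hz, by rw [hzz]; exact hz, by rw [hzz, hzz]⟩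
  have hclosed : IsClosed S := by
    have h1 : IsClosed (Set.Icc m b ∩ g ⁻¹' Set.Icc m b) :=
      hcm.preimage_isClosed_of_isClosed isClosed_Icc isClosed_Icc
    have h2 : ContinuousOn (fun x => g (g x) - x) (Set.Icc m b ∩ g ⁻¹' Set.Icc m b) :=
      (hcm.comp (hcm.mono Set.inter_subset_left) (fun x hx => hx.2)).sub continuousOn_id
    have h3 := h2.preimage_isClosed_of_isClosed h1 (isClosed_singleton (x := (0:ℝ)))
    convert h3 using 1
    ext x
    simp [hS, sub_eq_zero, and_assoc]
  have hp := hclosed.csSup_mem ⟨z, hzS⟩ hbdd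
  refine ⟨sSup S, rfl, hp.1.1, hp.1.2, hp.2.1.1, ?_, hp.2.2, fun x h1 h2 h3 h4 h5 =>
    le_csSup hbdd ⟨⟨h1, h2⟩, ⟨h3, h4⟩, h5⟩⟩
  have hzp := le_csSup hbdd hzS
  have := hanti.antitoneOn hz hp.1 hzp
  linarith

theorem second_iterate_turbulent_iff
    (a b m : ℝ) (g : ℝ → ℝ)
    (hab : a < b)
    (hcont : ContinuousOn g (Set.Icc a b))
    (hmaps : Set.MapsTo g (Set.Icc a b) (Set.Icc a b))
    (hm : m ∈ Set.Ioo a b)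
    (hmono : StrictMonoOn g (Set.Icc a m))
    (hanti : StrictAntiOn g (Set.Icc m b))
    (hga : g a ≥ a)
    (hgb : g b < b)
    (habove : ∀ x ∈ Set.Ioc a m, g x > x) :
    Turbulent a b (g ∘ g) ↔
      g (g m) < m ∧
        g (g (g m)) ≤
          sSup {x | x ∈ Set.Icc m b ∧ g x ∈ Set.Icc m b ∧ g (g x) = x} := by
  have hma := hm.1
  have hmb := hm.2
  have hgm : m < g m := habove m ⟨hma, le_rfl⟩
  obtain ⟨p, hpS, hmp, hpb, hmq, hqp, hpp, hpmax⟩ := pi_max a b m g hcont hm hanti hgb hgm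
  rw [← hpS]
  have lo : ∀ x, a ≤ x → x ≤ b → a ≤ g x := fun x h1 h2 => (hmaps ⟨h1, h2⟩).1
  have hi : ∀ x, a ≤ x → x ≤ b → g x ≤ b := fun x h1 h2 => (hmaps ⟨h1, h2⟩).2
  have inc : ∀ x y, a ≤ x → x < y → y ≤ m → g x < g y := fun x y h1 h2 h3 =>
    hmono ⟨h1, by linarith⟩ ⟨by linarith, h3⟩ h2
  have dec : ∀ x y, m ≤ x → x < y → y ≤ b → g y < g x := fun x y h1 h2 h3 =>
    hanti ⟨h1, by linarith⟩ ⟨by linarith, h3⟩ h2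
  have inc' : ∀ x y, a ≤ x → x ≤ y → y ≤ m → g x ≤ g y := fun x y h1 h2 h3 =>
    hmono.monotoneOn ⟨h1, by linarith⟩ ⟨by linarith, h3⟩ h2
  have dec' : ∀ x y, m ≤ x → x ≤ y → y ≤ b → g y ≤ g x := fun x y h1 h2 h3 =>
    hanti.antitoneOn ⟨h1, by linarith⟩ ⟨by linarith, h3⟩ h2
  have ab : ∀ x, a < x → x ≤ m → x < g x := fun x h1 h2 => habove x ⟨h1, h2⟩
  have top : ∀ x, a ≤ x → x ≤ b → g x ≤ g m := by
    intro x h1 h2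
    rcases le_total x m with h | h
    · exact inc' x m h1 h le_rfl
    · exact dec' m x le_rfl h h2
  have hcb : g m ≤ b := hi m hma.le hmb.le
  have hda : a ≤ g (g m) := lo _ (by linarith) hcb
  have hpc : p ≤ g m := by
    have := top (g p) (by linarith) (by linarith)
    linarith
  constructor
  · rintro ⟨x₁, ⟨h1a, h1b⟩, x₂, ⟨h2a, h2b⟩, x₃, ⟨h3a, h3b⟩, e2, e1, e3, hord⟩
    simp only [Function.comp] at e1 e2 e3
    have h1c : x₁ ≤ g m := by rw [← e1]; exact top _ (lo _ h1a h1b) (hi _ h1a h1b)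
    have h2c : x₂ ≤ g m := by rw [← e3]; exact top _ (lo _ h3a h3b) (hi _ h3a h3b)
    rcases eq_or_lt_of_le h1a with hx1 | hx1
    · -- `x₁ = a`
      subst hx1
      have key : ∀ u, a ≤ u → u ≤ b → g u = a → u = a ∨ u = b := by
        intro u hu1 hu2 hu
        by_contra hne
        push Not at hne
        have h1 : a < u := lt_of_le_of_ne hu1 (Ne.symm hne.1)
        have h2 : u < b := lt_of_le_of_ne hu2 hne.2
        rcases le_total u m with h | h
        · linarith [ab u h1 h]
        · linarith [dec u b h h2 le_rfl, lo b (by linarith) le_rfl]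
      have hlt : a < x₃ ∧ x₃ < x₂ := by
        rcases hord with h | h
        · exact h
        · linarith [h.1, h.2]
      have hcd : g m = b ∧ g b = a := by
        rcases key (g x₂) (lo _ h2a h2b) (hi _ h2a h2b) e2 with h | h
        · rcases key x₂ h2a h2b h with h' | h'
          · linarith [hlt.1, hlt.2]
          · subst h'
            exact ⟨le_antisymm hcb h2c, h⟩
        · have := top x₂ h2a h2b
          rw [h] at e2
          exact ⟨by linarith, e2⟩
      have hga' : g a = a := by
        rcases key (g a) (lo _ le_rfl h1b) (hi _ le_rfl h1b) e1 with h | h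
        · exact h
        · linarith [inc a m le_rfl hma le_rfl]
      rw [hcd.1, hcd.2, hga']
      exact ⟨hma, by linarith⟩
    · -- a fixed point above `a`
      have L : ∀ x, a < x → x ≤ b → x < g (g x) ∨ g (g m) ≤ g (g x) ∨ (m < x ∧ g x < m) := by
        intro x hx hxb
        rcases le_total x m with h | h
        · have h2 := ab x hx h
          rcases le_total (g x) m with h' | h'
          · left; linarith [ab (g x) (by linarith) h']
          · right; left
            exact dec' _ _ h' (top x hx.le hxb) hcb
        · rcases le_or_gt m (g x) with h' | h'
          · right; left
            exact dec' _ _ h' (top x hx.le hxb) hcb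
          · right; right
            refine ⟨lt_of_le_of_ne h ?_, h'⟩
            rintro rfl
            linarith
      have hdm : g (g m) < m := by
        by_contra hcon
        push Not at hcon
        have inv : ∀ x, m ≤ x → x ≤ g m → m ≤ g x ∧ g x ≤ g m := fun x h1 h2 =>
          ⟨by linarith [dec' x (g m) h1 h2 hcb], top x (by linarith) (by linarith)⟩
        have big : ∀ x, a < x → x ≤ m → x < g (g x) ∨ m ≤ g (g x) := by
          intro x h1 h2
          have h3 := ab x h1 h2
          rcases le_total (g x) m with h | h
          · left; linarith [ab (g x) (by linarith) h]
          · right; exact (inv _ h (top x h1.le (by linarith))).1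
        have hx1m : m ≤ x₁ := by
          by_contra h
          push Not at h
          rcases big x₁ hx1 h.le with h' | h' <;> linarith
        have hx2m : m ≤ x₂ := by
          by_contra h
          push Not at h
          rcases hord with ho | ho
          · linarith [ho.1, ho.2]
          · rcases le_total x₃ m with h3 | h3
            · rcases big x₃ (by linarith [ho.1]) h3 with h' | h' <;> linarith [ho.1]
            · have i1 := inv x₃ h3 (by linarith [ho.2])
              linarith [(inv _ i1.1 i1.2).1]
        have j1 := inv x₁ hx1m h1c
        have j2 := inv x₂ hx2m h2c
        rcases lt_trichotomy x₁ x₂ with h | h | h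
        · have := dec _ _ hx1m h h2b
          linarith [dec _ _ j2.1 this (by linarith)]
        · rcases hord with ho | ho <;> linarith [ho.1, ho.2]
        · have := dec _ _ hx2m h h1b
          linarith [dec _ _ j1.1 this (by linarith)]
      refine ⟨hdm, ?_⟩
      by_contra hcon
      push Not at hcon
      have hqm : g p ≤ b := by linarith
      -- the blocks `A = [d, q]`, `B = [p, c]` and `[q, p]`
      have A1 : ∀ x, g (g m) ≤ x → x < g p → p < g x ∧ g x ≤ g m := by
        intro x h1 h2
        refine ⟨?_, top x (by linarith) (by linarith)⟩
        rcases le_total x m with h | h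
        · linarith [inc' _ x hda h1 h]
        · linarith [dec x (g p) h h2 hqm]
      have B1 : ∀ x, p < x → x ≤ g m → g (g m) ≤ g x ∧ g x < g p := by
        intro x h1 h2
        exact ⟨dec' x (g m) (by linarith) h2 hcb, dec p x hmp h1 (by linarith)⟩
      have C1 : ∀ x, g p ≤ x → x ≤ p → g p ≤ g x ∧ g x ≤ p := by
        intro x h1 h2
        refine ⟨dec' x p (by linarith) h2 hpb, ?_⟩
        linarith [dec' (g p) x hmq h1 (by linarith)]
      have J : ∀ x, g (g m) ≤ x → x ≤ g m → g (g m) ≤ g x ∧ g x ≤ g m := by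
        intro x h1 h2
        rcases lt_or_ge x (g p) with h | h
        · have := A1 x h1 h
          exact ⟨by linarith, this.2⟩
        · rcases lt_or_ge p x with h' | h'
          · have := B1 x h' h2
            exact ⟨this.1, by linarith⟩
          · have := C1 x h h'
            exact ⟨by linarith, by linarith⟩
      have low : ∀ x, a < x → x < g (g m) → x < g (g x) := by
        intro x h1 h2
        rcases L x h1 (by linarith) with h | h | h
        · exact h
        · linarith
        · linarith [h.1]
      have hx1d : g (g m) ≤ x₁ := by
        by_contra h
        push Not at h
        linarith [low x₁ hx1 h]
      have hx2d : g (g m) ≤ x₂ := by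
        by_contra h
        push Not at h
        rcases hord with ho | ho
        · linarith [ho.1, ho.2]
        · rcases lt_or_ge x₃ (g (g m)) with h3 | h3
          · linarith [low x₃ (by linarith [ho.1]) h3, ho.1]
          · have i1 := J x₃ h3 (by linarith [ho.2])
            linarith [(J _ i1.1 i1.2).1]
      have hne : x₁ ≠ x₂ := by
        rintro rfl
        rcases hord with ho | ho <;> linarith [ho.1, ho.2]
      -- location of `g (g x₂)`
      have fA : x₂ < g p → g (g x₂) < g p := fun h =>
        (B1 _ (A1 x₂ hx2d h).1 (A1 x₂ hx2d h).2).2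
      have fB : p < x₂ → p < g (g x₂) := fun h =>
        (A1 _ (B1 x₂ h h2c).1 (B1 x₂ h h2c).2).1
      have fC : g p ≤ x₂ → x₂ ≤ p → g p ≤ g (g x₂) ∧ g (g x₂) ≤ p := fun h h' =>
        C1 _ (C1 x₂ h h').1 (C1 x₂ h h').2
      rcases lt_or_ge x₁ (g p) with hA | hA
      · have h2 : x₂ < g p := by
          by_contra h
          push Not at h
          rcases lt_or_ge p x₂ with h' | h'
          · linarith [fB h']
          · linarith [(fC h h').1]
        have a1 := A1 x₁ hx1d hA
        have a2 := A1 x₂ hx2d h2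
        have hx1m : x₁ < m := by
          by_contra h
          push Not at h
          have := hpmax (g x₁) (by linarith) (by linarith) (by rw [e1]; exact h)
            (by rw [e1]; exact h1b) (by rw [e1])
          linarith
        have heq : g x₁ = g x₂ := by
          rcases lt_trichotomy (g x₁) (g x₂) with h | h | h
          · linarith [dec _ _ (by linarith) h (by linarith)]
          · exact h
          · linarith [dec _ _ (by linarith) h (by linarith)]
        have hx2m : m < x₂ := by
          by_contra h
          push Not at h
          rcases lt_or_gt_of_ne hne with h' | h'
          · linarith [inc _ _ h1a h' h]
          · linarith [inc _ _ h2a h' hx1m.le]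
        rcases hord with ho | ho
        · have a3 := A1 x₃ (by linarith [ho.1]) (by linarith [ho.2])
          have h3 : g x₁ < g x₃ := by
            rcases le_total x₃ m with h | h
            · exact inc _ _ h1a ho.1 h
            · linarith [dec _ _ h ho.2 h2b]
          linarith [dec _ _ (by linarith) h3 (by linarith)]
        · linarith [ho.1, ho.2]
      · rcases lt_or_ge p x₁ with hB | hB
        · have h2 : p < x₂ := by
            by_contra h
            push Not at h
            rcases lt_or_ge x₂ (g p) with h' | h'
            · linarith [fA h']
            · linarith [(fC h' h).2]
          have b1 := B1 x₁ hB h1c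
          have b2 := B1 x₂ h2 h2c
          have hy1 : g x₁ < m := by
            by_contra h
            push Not at h
            linarith [hpmax x₁ (by linarith) h1b h (by linarith) e1]
          have hlt : x₂ < x₁ := by
            by_contra h
            push Not at h
            have h' := lt_of_le_of_ne h hne
            have h3 := dec _ _ (by linarith) h' h2b
            linarith [inc _ _ (by linarith) h3 hy1.le]
          rcases hord with ho | ho
          · linarith [ho.1, ho.2]
          · have k1 := dec _ _ (by linarith) ho.1 h3b
            have k2 := dec _ _ (by linarith [ho.1]) ho.2 h1b
            rcases le_total (g x₃) m with h | h
            · linarith [inc _ _ (by linarith) k2 h]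
            · linarith [dec _ _ h k1 (by linarith)]
        · have h2 : g p ≤ x₂ ∧ x₂ ≤ p := by
            constructor
            · by_contra h
              push Not at h
              linarith [fA h]
            · by_contra h
              push Not at h
              linarith [fB h]
          have c1 := C1 x₁ hA hB
          have c2 := C1 x₂ h2.1 h2.2
          rcases lt_or_gt_of_ne hne with h | h
          · have := dec _ _ (by linarith) h h2b
            linarith [dec _ _ (by linarith) this (by linarith)]
          · have := dec _ _ (by linarith [h2.1]) h h1b
            linarith [dec _ _ (by linarith) this (by linarith)]
  · rintro ⟨hd, hle⟩
    have hff : ContinuousOn (fun x => g (g x)) (Set.Icc a b) := hcont.comp hcont hmaps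
    have hpc' : p ≠ g m := by
      intro h
      rw [← h] at hd
      linarith
    obtain ⟨u, hu, hum⟩ := intermediate_value_Icc' hpc
      (hcont.mono (Set.Icc_subset_Icc (by linarith) hcb)) (show m ∈ _ from ⟨hd.le, hmq⟩)
    obtain ⟨x₂, hx2, hx2p⟩ := intermediate_value_Icc' hu.2
      (hff.mono (Set.Icc_subset_Icc (by linarith [hu.1]) hcb))
      (show p ∈ _ from ⟨hle, by simp only [hum]; exact hpc⟩)
    obtain ⟨x₃, hx3, hx32⟩ := intermediate_value_Icc hu.1
      (hff.mono (Set.Icc_subset_Icc (by linarith) (by linarith [hu.2])))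
      (show x₂ ∈ _ from ⟨by simp only [hpp]; linarith [hu.1, hx2.1],
        by simp only [hum]; exact hx2.2⟩)
    simp only at hx2p hx32
    have hux : u ≠ x₂ := by
      rintro rfl
      rw [hum] at hx2p
      exact hpc' hx2p.symm
    have hux' : u < x₂ := lt_of_le_of_ne hx2.1 hux
    refine ⟨p, ⟨by linarith, hpb⟩, x₂, ⟨by linarith [hu.1], by linarith [hx2.2]⟩, x₃,
      ⟨by linarith [hx3.1], by linarith [hx3.2, hu.2]⟩, hx2p, hpp, hx32, Or.inl ⟨?_, ?_⟩⟩
    · refine lt_of_le_of_ne hx3.1 ?_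
      rintro rfl
      linarith [hu.1]
    · linarith [hx3.2]
end

section
/- Let β > 0 and suppose ((β+1)/β)^β < α ≤ (β+1)·((β+1)/β)^β. Then the map f(k) = α k (1−k)^β, with m = 1/(1+β), satisfies: f maps [0,1] into [0,1]; f is strictly increasing on [0,m] and strictly decreasing on [m,1]; f(0) ≥ 0; f(1) < 1; and f(k) > k for all k ∈ (0,m]. -/
/-- For `((β+1)/β)^β < α ≤ (β+1)·((β+1)/β)^β`, the map `f(k) = α k (1−k)^β`
belongs to the Deng–Khan–Mitra class `𝔊` on `[0,1]` with turning point
`m = 1/(1+β)`. -/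
theorem pollution_map_in_class_G
    (α β : ℝ) (hβ : 0 < β)
    (hα₁ : ((β + 1) / β) ^ β < α)
    (hα₂ : α ≤ (β + 1) * ((β + 1) / β) ^ β)
    (f : ℝ → ℝ) (hf : ∀ k, f k = α * k * (1 - k) ^ β)
    (m : ℝ) (hm : m = 1 / (1 + β)) :
    Set.MapsTo f (Set.Icc 0 1) (Set.Icc 0 1) ∧
      StrictMonoOn f (Set.Icc 0 m) ∧
      StrictAntiOn f (Set.Icc m 1) ∧
      f 0 ≥ 0 ∧ f 1 < 1 ∧
      ∀ k ∈ Set.Ioc 0 m, f k > k := by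
  have hb1 : 0 < β + 1 := by linarith
  have hm0 : 0 < m := by rw [hm]; positivity
  have hmul : m * (1 + β) = 1 := by rw [hm]; field_simp
  have hm1 : m < 1 := by nlinarith
  have hc : 0 < ((β + 1) / β) ^ β := Real.rpow_pos_of_pos (by positivity) _
  have hα : 0 < α := hc.trans hα₁
  have h1m : 1 - m = ((β + 1) / β)⁻¹ := by
    rw [hm]; field_simp; ring
  have hpm : ((β + 1) / β) ^ β * (1 - m) ^ β = 1 := by
    rw [h1m, Real.inv_rpow (by positivity)]
    exact mul_inv_cancel₀ hc.ne'
  have hpm0 : 0 < (1 - m) ^ β := Real.rpow_pos_of_pos (by linarith) _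
  have hfun : f = fun k => α * k * (1 - k) ^ β := funext hf
  have hder : ∀ k < 1, HasDerivAt f (α * (1 - k) ^ (β - 1) * (1 - (1 + β) * k)) k := by
    intro k hk
    have hk' : 0 < 1 - k := by linarith
    have h1 : HasDerivAt (fun k : ℝ => 1 - k) (-1) k := by
      simpa using (hasDerivAt_id k).const_sub 1
    have h2 := h1.rpow_const (p := β) (Or.inl hk'.ne')
    have h3 : HasDerivAt (fun k : ℝ => α * k) α k := by
      simpa using (hasDerivAt_id k).const_mul α
    have h4 := h3.mul h2
    rw [hfun]
    refine h4.congr_deriv ?_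
    have : (1 - k) ^ β = (1 - k) ^ (β - 1) * (1 - k) := by
      rw [← Real.rpow_add_one hk'.ne']; ring_nf
    rw [this]; ring
  have hcont : Continuous f := by
    rw [hfun]
    exact (continuous_const.mul continuous_id).mul
      ((continuous_const.sub continuous_id).rpow_const (fun _ => Or.inr hβ.le))
  have hmono : StrictMonoOn f (Set.Icc 0 m) := by
    apply strictMonoOn_of_deriv_pos (convex_Icc 0 m) hcont.continuousOn
    intro k hk
    rw [interior_Icc] at hk
    have hk1 : k < 1 := hk.2.trans hm1
    rw [(hder k hk1).deriv]
    have : 0 < (1 - k) ^ (β - 1) := Real.rpow_pos_of_pos (by linarith) _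
    have h5 : 0 < 1 - (1 + β) * k := by nlinarith [hk.2]
    positivity
  have hanti : StrictAntiOn f (Set.Icc m 1) := by
    apply strictAntiOn_of_deriv_neg (convex_Icc m 1) hcont.continuousOn
    intro k hk
    rw [interior_Icc] at hk
    rw [(hder k hk.2).deriv]
    have : 0 < (1 - k) ^ (β - 1) := Real.rpow_pos_of_pos (by linarith [hk.2]) _
    have h5 : 1 - (1 + β) * k < 0 := by nlinarith [hk.1]
    exact mul_neg_of_pos_of_neg (by positivity) h5
  have hfm : f m ≤ 1 := by
    rw [hf]
    calc α * m * (1 - m) ^ β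
        ≤ ((β + 1) * ((β + 1) / β) ^ β) * m * (1 - m) ^ β := by gcongr
      _ = (m * (1 + β)) * (((β + 1) / β) ^ β * (1 - m) ^ β) := by ring
      _ = 1 := by rw [hmul, hpm]; norm_num
  refine ⟨?_, hmono, hanti, ?_, ?_, ?_⟩
  · intro k hk
    refine ⟨?_, ?_⟩
    · rw [hf]
      exact mul_nonneg (mul_nonneg hα.le hk.1) (Real.rpow_nonneg (by linarith [hk.2]) _)
    · rcases le_total k m with h | h
      · exact (hmono.monotoneOn ⟨hk.1, h⟩ ⟨hm0.le, le_rfl⟩ h).trans hfm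
      · exact (hanti.antitoneOn ⟨le_rfl, hm1.le⟩ ⟨h, hk.2⟩ h).trans hfm
  · rw [hf]; simp
  · rw [hf]; simp [Real.zero_rpow hβ.ne']
  · intro k hk
    rw [hf]
    have h6 : (1 - m) ^ β ≤ (1 - k) ^ β :=
      Real.rpow_le_rpow (by linarith) (by linarith [hk.2]) hβ.le
    have h7 : 1 < α * (1 - k) ^ β :=
      calc 1 = ((β + 1) / β) ^ β * (1 - m) ^ β := hpm.symm
        _ < α * (1 - m) ^ β := by gcongr
        _ ≤ α * (1 - k) ^ β := by gcongr
    nlinarith [hk.1]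
end

section
/- Let α > 0 and β > 0, and set m = 1/(1+β). If f(m) > m, then f(k) > k for every k ∈ (0,m]. -/
/-- If `f(m) > m` then `f(k) > k` for all `k ∈ (0, m]`, where `m = 1/(1+β)`. -/
theorem pollution_map_above_diagonal
    (α β : ℝ) (hα : 0 < α) (hβ : 0 < β)
    (f : ℝ → ℝ) (hf : ∀ k, f k = α * k * (1 - k) ^ β)
    (m : ℝ) (hm : m = 1 / (1 + β))
    (hfm : f m > m) :
    ∀ k ∈ Set.Ioc 0 m, f k > k := by
  rintro k ⟨hk0, hkm⟩
  have hm0 : 0 < m := lt_of_lt_of_le hk0 hkm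
  have hm1 : m ≤ 1 := by
    rw [hm, div_le_one (by linarith)]
    linarith
  rw [hf] at hfm ⊢
  have h1 : 1 < α * (1 - m) ^ β := by
    by_contra! h
    nlinarith [mul_le_mul_of_nonneg_left h hm0.le]
  have h2 : (1 - m) ^ β ≤ (1 - k) ^ β :=
    Real.rpow_le_rpow (by linarith) (by linarith) hβ.le
  have h3 : 1 < α * (1 - k) ^ β :=
    lt_of_lt_of_le h1 (mul_le_mul_of_nonneg_left h2 hα.le)
  have h4 := mul_lt_mul_of_pos_left h3 hk0
  linarith
end

section
/- Let β = 1 and 1 + √5 < α ≤ 4, and let f(k) = α k (1−k). Then the set Π = {x ∈ [1/2, 1] : f(x) ∈ [1/2, 1] and f(f(x)) = x} equals the singleton {(α−1)/α}. -/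
/-- For the logistic map `f(k) = α k (1−k)` with `1 + √5 < α ≤ 4`, the set
`Π = {x ∈ [1/2,1] : f(x) ∈ [1/2,1], f(f(x)) = x}` is the singleton
`{(α−1)/α}`. -/
theorem logistic_Pi_singleton
    (α : ℝ) (hα₁ : 1 + Real.sqrt 5 < α) (hα₂ : α ≤ 4)
    (f : ℝ → ℝ) (hf : ∀ k, f k = α * k * (1 - k)) :
    {x | x ∈ Set.Icc (1 / 2 : ℝ) 1 ∧ f x ∈ Set.Icc (1 / 2 : ℝ) 1 ∧ f (f x) = x} =
      {(α - 1) / α} := by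
  have h5 : Real.sqrt 5 ^ 2 = 5 := Real.sq_sqrt (by norm_num)
  have h0 : 0 ≤ Real.sqrt 5 := Real.sqrt_nonneg 5
  have hq : 5 < (α - 1) ^ 2 := by nlinarith
  have h2 : 2 < α := by nlinarith
  have hα : α ≠ 0 := by linarith
  ext x
  simp only [Set.mem_ofPred_eq, Set.mem_singleton_iff]
  constructor
  · rintro ⟨⟨hx1, hx2⟩, ⟨hy1, hy2⟩, hxy⟩
    have hy := hf x
    rw [hf (f x)] at hxy
    generalize f x = y at *
    by_cases hne : x = y
    · subst hne
      have hx0 : x ≠ 0 := by linarith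
      have : 1 = α * (1 - x) := by
        apply mul_left_cancel₀ hx0
        linarith
      rw [eq_div_iff hα]
      linarith
    · exfalso
      have hs : α * (x + y - 1) = 1 := by
        apply mul_left_cancel₀ (sub_ne_zero.mpr hne)
        linear_combination hxy + hy
      have hp : α * x + α * y = α * x * (α * y) := by
        linear_combination α * hy - α * x * hs
      have hp' : α ^ 2 * (x * y) = α + 1 := by linarith
      have h3 : 0 ≤ α ^ 2 * ((x - 1 / 2) * (y - 1 / 2)) :=
        mul_nonneg (sq_nonneg _) (mul_nonneg (by linarith) (by linarith))
      have h4 : α ^ 2 * ((x - 1 / 2) * (y - 1 / 2)) = (4 + 2 * α - α ^ 2) / 4 := by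
        linear_combination hp' - α / 2 * hs
      nlinarith
  · intro hx
    have hfx : f x = x := by
      rw [hf, hx]
      field_simp
      ring
    have h1 : 1 / 2 ≤ x := by
      rw [hx, le_div_iff₀ (by linarith)]
      linarith
    have h1' : x ≤ 1 := by
      rw [hx, div_le_iff₀ (by linarith)]
      linarith
    rw [hfx, hfx]
    exact ⟨⟨h1, h1'⟩, ⟨h1, h1'⟩, rfl⟩
end

section
/- Let β = 1 and 2 < α ≤ 4, and let f(k) = α k (1−k). Then f has a periodic point of odd minimal period at least 3 if and only if α > 1 + √5 and f(f(f(1/2))) < (α−1)/α. -/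
/-- If `[a,z]` and `[z,M]` are swapped by `f`, there is no nontrivial odd period. -/
lemma logistic_aux_swap (α : ℝ) (hα₁ : 2 < α)
    (f : ℝ → ℝ) (hf : ∀ k, f k = α * k * (1 - k)) (z a : ℝ) (hz : α * z = α - 1)
    (ha1 : a ≤ 1 / 2) (ha2 : 1 - z ≤ a) (ha3 : a ≤ f (α / 4))
    (x : ℝ) (hx : x ∈ Set.Icc (0 : ℝ) 1)
    (hodd : Odd (Function.minimalPeriod f x)) (h3 : 3 ≤ Function.minimalPeriod f x) : False := by
  have hα0 : 0 < α := by linarith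
  have hle : ∀ k, f k ≤ α / 4 := by
    intro k; rw [hf]; nlinarith [mul_nonneg hα0.le (sq_nonneg (k - 1 / 2))]
  have hzh : 1 / 2 < z := by nlinarith
  have hdiff : ∀ u v, f u - f v = α * ((u - v) * (1 - u - v)) := by
    intro u v; rw [hf, hf]; ring
  have hfz : f z = z := by
    rw [hf]; rw [hz]; linear_combination -hz
  have hL : ∀ u, a ≤ u → u ≤ z → z ≤ f u ∧ f u ≤ α / 4 := by
    intro u h1 h2
    refine ⟨?_, hle u⟩
    have h := hdiff u z
    have : 0 ≤ α * ((z - u) * (u + z - 1)) :=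
      mul_nonneg hα0.le (mul_nonneg (by linarith) (by linarith))
    nlinarith
  have hR : ∀ u, z ≤ u → u ≤ α / 4 → a ≤ f u ∧ f u ≤ z := by
    intro u h1 h2
    constructor
    · have h := hdiff u (α / 4)
      have : 0 ≤ α * ((α / 4 - u) * (u + α / 4 - 1)) :=
        mul_nonneg hα0.le (mul_nonneg (by linarith) (by linarith))
      nlinarith
    · have h := hdiff u z
      have : 0 ≤ α * ((u - z) * (u + z - 1)) :=
        mul_nonneg hα0.le (mul_nonneg (by linarith) (by linarith))
      nlinarith
  set n := Function.minimalPeriod f x with hn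
  have hper : ∀ j, f^[n] (f^[j] x) = f^[j] x := by
    intro j
    have h : Function.IsPeriodicPt f n x := Function.isPeriodicPt_minimalPeriod f x
    exact (h.apply_iterate j)
  have hx0 : 0 < x := by
    rcases hx.1.lt_or_eq with h | h
    · exact h
    · exfalso
      have : Function.IsFixedPt f x := by
        show f x = x
        rw [← h, hf]; ring
      have := Function.minimalPeriod_eq_one_iff_isFixedPt.2 this
      omega
  obtain ⟨j, hj⟩ : ∃ j, 1 / 2 ≤ f^[j] x := by
    by_contra! hcon
    have hgrow : ∀ u, 0 < u → u < 1 / 2 → u < f u := by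
      intro u h1 h2; rw [hf]; nlinarith [mul_pos h1 (sub_pos.2 h2), mul_pos h1 (sub_pos.2 hα₁)]
    have hge : ∀ j, x ≤ f^[j] x := by
      intro j
      induction j with
      | zero => simp
      | succ j ih =>
        rw [Function.iterate_succ_apply']
        exact ih.trans (hgrow _ (by linarith) (hcon j)).le
    obtain ⟨k, hk⟩ : ∃ k, n = k + 1 := ⟨n - 1, by omega⟩
    have h0 := hper 0
    rw [hk, Function.iterate_succ_apply'] at h0
    simp only [Function.iterate_zero, id] at h0
    have := hgrow (f^[k] x) (by linarith [hge k]) (hcon k)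
    linarith [hge k]
  set y := f^[j] x with hy
  have hyn : f^[n] y = y := hper j
  obtain ⟨k, hk⟩ := hodd
  have hyM : y ≤ α / 4 := by
    have h := hle (f^[2 * k] y)
    rw [← Function.iterate_succ_apply' f, ← Nat.add_one, ← hk, hyn] at h
    exact h
  have hyz : y = z := by
    rcases le_total y z with h | h
    · have key : ∀ i, a ≤ f^[2 * i] y ∧ f^[2 * i] y ≤ z := by
        intro i
        induction i with
        | zero => exact ⟨by simp; linarith, by simpa using h⟩
        | succ i ih =>
          rw [show 2 * (i + 1) = 2 * i + 1 + 1 by ring, Function.iterate_succ_apply',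
            Function.iterate_succ_apply']
          have h1 := hL _ ih.1 ih.2
          exact hR _ h1.1 h1.2
      have h2 := hL _ (key k).1 (key k).2
      rw [← Function.iterate_succ_apply' f, ← Nat.add_one, ← hk, hyn] at h2
      linarith [h2.1]
    · have key : ∀ i, z ≤ f^[2 * i] y ∧ f^[2 * i] y ≤ α / 4 := by
        intro i
        induction i with
        | zero => exact ⟨by simpa using h, by simpa using hyM⟩
        | succ i ih =>
          rw [show 2 * (i + 1) = 2 * i + 1 + 1 by ring, Function.iterate_succ_apply',
            Function.iterate_succ_apply']
          have h1 := hR _ ih.1 ih.2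
          exact hL _ h1.1 h1.2
      have h2 := hR _ (key k).1 (key k).2
      rw [← Function.iterate_succ_apply' f, ← Nat.add_one, ← hk, hyn] at h2
      linarith [h2.2]
  have hfix : Function.IsFixedPt f y := by
    show f y = y
    rw [hyz, hfz]
  have h1 := Function.minimalPeriod_eq_one_iff_isFixedPt.2 hfix
  have hxp : x ∈ Function.periodicPts f := Function.minimalPeriod_pos_iff_mem_periodicPts.1 (by omega)
  have h2 := Function.minimalPeriod_apply_iterate hxp j
  rw [← hy, h1] at h2
  omega

/-- Points of `(1/2,z)` are pushed by even iterates to the left of `1/2`. -/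
lemma logistic_aux_escape (α : ℝ) (hα₁ : 3 < α) (hα₂ : α ≤ 4) (hq : 0 < α ^ 2 - 2 * α - 4)
    (f : ℝ → ℝ) (hf : ∀ k, f k = α * k * (1 - k)) (z w : ℝ) (hz : α * z = α - 1)
    (hw1 : 1 / 2 < w) (hw2 : w < z) : ∃ k, f^[2 * k] w ≤ 1 / 2 := by
  by_contra! hcon
  have hα0 : 0 < α := by linarith
  obtain ⟨δ, hδ, hδ1, hδ2⟩ : ∃ δ > 0, δ ≤ (α ^ 2 - 2 * α - 4) / 4 ∧ δ ≤ α - 3 :=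
    ⟨min ((α ^ 2 - 2 * α - 4) / 4) (α - 3), lt_min (by linarith) (by linarith),
      min_le_left _ _, min_le_right _ _⟩
  have hQ : ∀ u, 1 / 2 ≤ u → u ≤ z →
      δ ≤ -(α ^ 2 * u ^ 2 - α * (α + 1) * u + (α + 1)) := by
    intro u h1 h2
    have hp : 0 ≤ α ^ 2 * ((u - 1 / 2) * (z - u)) :=
      mul_nonneg (by positivity) (mul_nonneg (by linarith) (by linarith))
    have hz2 : α ^ 2 * z = α * (α - 1) := by rw [← hz]; ring
    have hz3 : α ^ 2 * z * u = α * (α - 1) * u := by rw [hz2]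
    have ha : α / 2 ≤ α * u := by nlinarith
    have hc : 0 ≤ (α * u - α / 2) * (4 - α) := mul_nonneg (by linarith) (by linarith)
    nlinarith [hp, hz2, hz3, hc]
  have hstep : ∀ u, 1 / 2 ≤ u → u < z → (1 + α / 2 * δ) * (z - u) ≤ z - f (f u) := by
    intro u h1 h2
    have hz' : z = 1 - 1 / α := by field_simp; linarith
    have e : z - f (f u) =
      (1 + α * u * (-(α ^ 2 * u ^ 2 - α * (α + 1) * u + (α + 1)))) * (z - u) := by
      rw [hf, hf, hz']; field_simp; ring
    rw [e]
    refine mul_le_mul_of_nonneg_right ?_ (by linarith)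
    have := hQ u h1 h2.le
    have h3 : α / 2 ≤ α * u := by nlinarith
    have := mul_le_mul h3 this hδ.le (by positivity)
    linarith
  have hr : 1 < 1 + α / 2 * δ := by have : 0 < α / 2 * δ := by positivity
                                    linarith
  have hall : ∀ k, (1 + α / 2 * δ) ^ k * (z - w) ≤ z - f^[2 * k] w := by
    intro k
    induction k with
    | zero => simp
    | succ k ih =>
      rw [show 2 * (k + 1) = 2 * k + 1 + 1 by ring, Function.iterate_succ_apply',
            Function.iterate_succ_apply']
      have hpos : 0 < (1 + α / 2 * δ) ^ k * (z - w) := mul_pos (by positivity) (by linarith)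
      refine le_trans ?_ (hstep _ (hcon k).le (by linarith))
      rw [pow_succ', mul_assoc]
      exact mul_le_mul_of_nonneg_left ih (by positivity)
  obtain ⟨k, hk⟩ := pow_unbounded_of_one_lt (z / (z - w)) hr
  rw [div_lt_iff₀ (by linarith)] at hk
  linarith [hall k, hcon k]

/-- For the logistic map `f(k) = α k (1−k)` with `2 < α ≤ 4`, `f` has a periodic
point of odd minimal period at least 3 iff `α > 1 + √5` and
`f³(1/2) < (α−1)/α`. -/
theorem logistic_odd_period_iff
    (α : ℝ) (hα₁ : 2 < α) (hα₂ : α ≤ 4)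
    (f : ℝ → ℝ) (hf : ∀ k, f k = α * k * (1 - k)) :
    (∃ x ∈ Set.Icc (0 : ℝ) 1,
        Odd (Function.minimalPeriod f x) ∧ 3 ≤ Function.minimalPeriod f x) ↔
      α > 1 + Real.sqrt 5 ∧ f (f (f (1 / 2))) < (α - 1) / α := by
  have hα0 : 0 < α := by linarith
  obtain ⟨z, hzdef⟩ : ∃ z, z = (α - 1) / α := ⟨_, rfl⟩
  have hz : α * z = α - 1 := by rw [hzdef]; field_simp
  rw [← hzdef]
  have hs5 : Real.sqrt 5 ^ 2 = 5 := Real.sq_sqrt (by norm_num)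
  have hs0 : 0 ≤ Real.sqrt 5 := Real.sqrt_nonneg 5
  have hs2 : 2 < Real.sqrt 5 := by nlinarith
  have hM : f (1 / 2) = α / 4 := by rw [hf]; ring
  have hzh : 1 / 2 < z := by nlinarith
  have hz1 : z < 1 := by nlinarith
  have hfz : f z = z := by
    rw [hf]; rw [hz]; linear_combination -hz
  have hm : 1 / 2 - f (α / 4) = (α - 2) * (α ^ 2 - 2 * α - 4) / 16 := by rw [hf]; ring
  have hdiff : ∀ u, f u - z = α * ((z - u) * (u + z - 1)) := by
    intro u
    have h : α * z * (1 - z) - z = 0 := by rw [← hf, hfz]; ring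
    rw [hf]; linear_combination h
  constructor
  · rintro ⟨x, hx, hodd, h3⟩
    by_contra hcon
    rw [not_and_or, not_lt, not_lt] at hcon
    by_cases hA : α ≤ 1 + Real.sqrt 5
    · refine logistic_aux_swap α hα₁ f hf z (1 / 2) hz le_rfl (by linarith) ?_ x hx hodd h3
      have : (α - 2) * (α ^ 2 - 2 * α - 4) ≤ 0 :=
        mul_nonpos_of_nonneg_of_nonpos (by linarith) (by nlinarith)
      linarith
    · have hB := hcon.resolve_left hA
      push Not at hA
      have : 0 < (α - 2) * (α ^ 2 - 2 * α - 4) := mul_pos (by linarith) (by nlinarith)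
      rw [hM] at hB
      refine logistic_aux_swap α hα₁ f hf z (f (α / 4)) hz (by linarith) ?_ le_rfl x hx hodd h3
      have h := hdiff (f (α / 4))
      by_contra! hlt
      have : 0 < α * ((z - f (α / 4)) * (1 - z - f (α / 4))) :=
        mul_pos hα0 (mul_pos (by linarith) (by linarith))
      nlinarith
  · rintro ⟨hA, hB⟩
    have hq : 0 < α ^ 2 - 2 * α - 4 := by nlinarith
    obtain ⟨w, hw1, hw2⟩ := exists_between (max_lt hB hzh)
    rw [max_lt_iff] at hw1
    obtain ⟨k, hk⟩ := logistic_aux_escape α (by linarith) hα₂ hq f hf z w hz hw1.2 hw2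
    have hcf : Continuous f := by
      rw [show f = fun k => α * k * (1 - k) from funext hf]; fun_prop
    have hitz : ∀ n, f^[n] z = z := fun n => Function.iterate_fixed hfz n
    obtain ⟨x, hx, hxk⟩ : ∃ x ∈ Set.Icc w z, f^[2 * k] x = 1 / 2 :=
      intermediate_value_Icc hw2.le (hcf.iterate _).continuousOn
        ⟨hk, by rw [hitz]; exact hzh.le⟩
    have hxz : x < z := by
      rcases hx.2.lt_or_eq with h | h
      · exact h
      · rw [h, hitz] at hxk; linarith
    have hxN : f^[2 * k + 3] x < x := by
      rw [show 2 * k + 3 = 2 * k + 1 + 1 + 1 by ring, Function.iterate_succ_apply',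
        Function.iterate_succ_apply', Function.iterate_succ_apply', hxk]
      linarith [hx.1]
    have hz'N : f^[2 * k + 3] (1 - z) = z := by
      rw [show 2 * k + 3 = 2 * k + 2 + 1 by ring, Function.iterate_succ_apply]
      have : f (1 - z) = z := by have := hdiff (1 - z); linarith [this, show α * ((z - (1 - z)) * (1 - z + z - 1)) = 0 by ring]
      rw [this, hitz]
    obtain ⟨y, hy, hyN⟩ : ∃ y ∈ Set.Icc (1 - z) x, f^[2 * k + 3] y - y = 0 :=
      intermediate_value_Icc' (f := fun y => f^[2 * k + 3] y - y) (by linarith [hx.1])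
        ((hcf.iterate _).sub continuous_id).continuousOn
        ⟨by linarith, by linarith⟩
    have hdvd : Function.minimalPeriod f y ∣ 2 * k + 3 :=
      Function.IsPeriodicPt.minimalPeriod_dvd (sub_eq_zero.1 hyN)
    have hyodd : Odd (Function.minimalPeriod f y) :=
      Odd.of_dvd_nat ⟨k + 1, by ring⟩ hdvd
    have hne : Function.minimalPeriod f y ≠ 1 := by
      intro h
      have h : f y = y := Function.minimalPeriod_eq_one_iff_isFixedPt.1 h
      have hd := hdiff y
      rw [h] at hd
      have : 0 ≤ α * ((z - y) * (y + z - 1)) :=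
        mul_nonneg hα0.le (mul_nonneg (by linarith [hy.2]) (by linarith [hy.1]))
      linarith [hy.2]
    refine ⟨y, ⟨by linarith [hy.1], by linarith [hy.2]⟩, hyodd, ?_⟩
    obtain ⟨i, hi⟩ := hyodd
    omega
end

section
/- Let β = 1 and 2 < α ≤ 4, and let f(k) = α k (1−k). Then the second iterate f∘f is turbulent if and only if α > 1 + √5 and f(f(f(1/2))) ≤ (α−1)/α. -/
/-- If `f²(1/2) > 1/α` then `f ∘ f` is not turbulent. -/
lemma no_turb (α q : ℝ) (hα₁ : 2 < α) (hα₂ : α ≤ 4) (hq : α * q = 1)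
    (f : ℝ → ℝ) (hf : ∀ k, f k = α * k * (1 - k)) (hc : q < f (α / 4)) :
    ¬ Turbulent 0 1 (f ∘ f) := by
  have q0 : 0 < q := by
    by_contra h
    nlinarith
  have q1 : q < 1 / 2 := by nlinarith
  have sym : ∀ u, f (1 - u) = f u := fun u => by rw [hf, hf]; ring
  have hd : ∀ u v, f u - f v = α * ((u - v) * (1 - u - v)) := fun u v => by rw [hf, hf]; ring
  have up : ∀ u v, u < v → u + v < 1 → f u < f v := fun u v h1 h2 => by
    have := hd v u
    have : 0 < α * ((v - u) * (1 - v - u)) :=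
      mul_pos (by linarith) (mul_pos (by linarith) (by linarith))
    linarith
  have dn : ∀ u v, u < v → 1 < u + v → f v < f u := fun u v h1 h2 => by
    have := up (1 - v) (1 - u) (by linarith) (by linarith)
    rwa [sym, sym] at this
  have dn' : ∀ u v, u ≤ v → 1 ≤ u + v → f v ≤ f u := fun u v h1 h2 => by
    have := hd u v
    have : 0 ≤ α * ((v - u) * (u + v - 1)) :=
      mul_nonneg (by linarith) (mul_nonneg (by linarith) (by linarith))
    nlinarith
  have eqc : ∀ u v, f u = f v → u = v ∨ u = 1 - v := fun u v h => by
    have h1 := hd u v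
    rw [h, sub_self] at h1
    have h2 : (u - v) * (1 - u - v) = 0 := by
      rcases mul_eq_zero.1 h1.symm with h | h
      · linarith
      · exact h
    rcases mul_eq_zero.1 h2 with h | h
    · left; linarith
    · right; linarith
  have conc : ∀ u w v, u ≤ w → w ≤ v → f u ≤ f w ∨ f v ≤ f w := fun u w v h1 h2 => by
    rcases le_total (u + w) 1 with h | h
    · left
      have := dn' (1 - w) (1 - u) (by linarith) (by linarith)
      rwa [sym, sym] at this
    · right
      exact dn' w v h2 (by linarith)
  have mx : ∀ u, f u ≤ α / 4 := fun u => by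
    rw [hf]; nlinarith [mul_nonneg (by linarith : (0:ℝ) ≤ α) (sq_nonneg (u - 1 / 2))]
  have α4 : α / 4 < 1 := by
    by_contra h
    have : α = 4 := by linarith
    rw [hf, this] at hc
    linarith
  have fp : f (1 - q) = 1 - q := by
    rw [hf]; linear_combination (1 - q) * hq
  have fq : f q = 1 - q := by rw [← fp, sym]
  have big : ∀ u, 1 / 2 ≤ u → u ≤ α / 4 → q < f u := fun u h1 h2 =>
    lt_of_lt_of_le hc (dn' u _ h2 (by linarith))
  -- lower bound for second iterate
  have low : ∀ u w, q < f u → u ≤ w → w ≤ α / 4 → q < f w := fun u w h1 h2 h3 => by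
    rcases conc u w _ h2 h3 with h | h <;> linarith
  -- facts on two-cycles
  have cyc : ∀ a b, f a = b → f b = a → a < b → a + b = 1 + q →
      a < 1 - q ∧ 1 - q < b ∧ q < a ∧ b < 1 := fun a b hab hba h1 h2 => by
    have hb : b ≤ α / 4 := hab ▸ mx a
    refine ⟨?_, ?_, by linarith, by linarith⟩
    · by_contra h
      have := dn' (1 - q) a (by linarith) (by linarith)
      linarith
    · by_contra h
      have := dn' b (1 - q) (by linarith) (by linarith)
      linarith
  have half : ∀ a b, f a = b → f b = a → 1 / 2 < a → a < b → a + b = 1 + q →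
      1 / 2 < f (α / 4) := fun a b hab hba h1 h2 h3 => by
    have e : α * (a * b) = 1 + q := by
      have h4 := hf a
      rw [hab] at h4
      linear_combination h3 - h4 + α * a * h3 + a * hq
    have hp := mul_pos (sub_pos.2 h1) (sub_pos.2 (h1.trans h2))
    have hp2 : α * ((a - 1 / 2) * (b - 1 / 2)) > 0 := mul_pos (by linarith) hp
    have h5 : α * ((a - 1 / 2) * (b - 1 / 2)) = 1 + q - (α + 1) / 2 + α / 4 := by
      linear_combination e - α / 2 * h3 - hq / 2
    have h6 : α ^ 2 - 2 * α - 4 < 0 := by nlinarith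
    rw [hf]
    nlinarith [mul_pos (sub_pos.2 hα₁) (neg_pos.2 h6)]
  rintro ⟨x₁, ⟨h10, h11⟩, x₂, ⟨h20, h21⟩, x₃, ⟨h30, h31⟩, e2, e1, e3, ho⟩
  simp only [Function.comp] at e1 e2 e3
  have hne : x₂ ≠ x₁ := by rintro rfl; rcases ho with h | h <;> linarith [h.1, h.2]
  have c2 : x₂ ≤ α / 4 := e3 ▸ mx _
  have y3 := mx x₃
  have y2 := mx x₂
  have hy := eqc _ _ (e2.trans e1.symm)
  generalize hy1 : f x₁ = y₁ at *
  have key : x₁ = y₁ ∨ x₁ + y₁ = 1 + q := by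
    have h := hd x₁ y₁
    rw [hy1, e1] at h
    have : (x₁ - y₁) * (x₁ + y₁ - 1 - q) = 0 := by linear_combination q * h + (x₁ - y₁) * (1 - x₁ - y₁) * hq
    rcases mul_eq_zero.1 this with h | h
    · left; linarith
    · right; linarith
  -- the small-x₂ situation
  have small : ∀ u, (∀ w, x₂ ≤ w → w ≤ x₁ → u ≤ f w) → q < f u → x₂ < q → x₂ < x₁ → False := by
    intro u h1 h2 h3 h4
    have hx : x₂ ≤ x₃ ∧ x₃ ≤ x₁ := by rcases ho with h | h <;> constructor <;> linarith [h.1, h.2]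
    have := low u _ h2 (h1 x₃ hx.1 hx.2) y3
    linarith
  have sides : f x₂ < 1 - q → x₂ < q ∨ 1 - q < x₂ := by
    intro h
    by_contra! h'
    rcases conc q x₂ (1 - q) h'.1 h'.2 with h | h <;> linarith
  rcases lt_trichotomy x₁ y₁ with hlt | heq | hlt
  · -- x₁ is the lower point of the two-cycle
    have hs : x₁ + y₁ = 1 + q := key.resolve_left hlt.ne
    obtain ⟨g1, g2, g3, g4⟩ := cyc _ _ hy1 e1 hlt hs
    rcases hy with hy | hy
    · have hx := (eqc _ _ (hy.trans hy1.symm)).resolve_left hne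
      rcases lt_or_ge x₁ (1 / 2) with ha | ha
      · have : y₁ < f x₃ := by
          have h1 : x₁ < x₃ ∧ x₃ < 1 - x₁ := by rcases ho with h | h <;> constructor <;> linarith [h.1, h.2]
          rw [← hy1]
          rcases le_total x₃ (1 / 2) with h | h
          · exact up _ _ h1.1 (by linarith)
          · rw [← sym x₁]; exact dn _ _ h1.2 (by linarith)
        have := dn _ _ this (by linarith)
        linarith
      · have ha' : 1 / 2 < x₁ := lt_of_le_of_ne ha (by rintro h; apply hne; linarith)
        have hh := half _ _ hy1 e1 ha' hlt hs
        have hx3 : x₂ ≤ x₃ ∧ x₃ ≤ x₁ := by rcases ho with h | h <;> constructor <;> linarith [h.1, h.2]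
        have : y₁ ≤ f x₃ := by
          rcases conc _ _ _ hx3.1 hx3.2 with h | h <;> linarith
        have := dn' _ _ y3 (by linarith)
        linarith
    · have h1 := sides (by linarith)
      rcases h1 with h1 | h1
      · refine small (1 - y₁) ?_ (by rw [sym]; linarith) h1 (by linarith)
        intro w hw1 hw2
        rcases conc _ _ _ hw1 hw2 with h | h <;> linarith
      · have := big x₂ (by linarith) c2
        linarith
  · -- fixed point of f
    subst heq
    have : x₁ = 0 ∨ x₁ = 1 - q := by
      have h := hy1
      rw [hf] at h
      have : x₁ * (x₁ - (1 - q)) = 0 := by linear_combination (-q) * h + (x₁ - x₁ ^ 2) * hq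
      rcases mul_eq_zero.1 this with h | h
      · left; exact h
      · right; linarith
    rcases this with h0 | h0
    · rcases hy with hy | hy
      · have hx := (eqc _ _ (hy.trans hy1.symm)).resolve_left hne
        linarith
      · linarith
    · subst h0
      rcases hy with hy | hy
      · have hx := (eqc _ _ (hy.trans hy1.symm)).resolve_left hne
        have hx' : x₂ = q := by linarith
        have hx3 : x₂ ≤ x₃ ∧ x₃ ≤ 1 - q := by rcases ho with h | h <;> constructor <;> linarith [h.1, h.2]
        have : 1 - q ≤ f x₃ := by
          rcases conc _ _ _ hx3.1 hx3.2 with h | h <;> linarith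
        have := low (1 - q) _ (by linarith) this y3
        linarith
      · rcases sides (by linarith) with h1 | h1
        · refine small q ?_ (by linarith) h1 (by linarith)
          intro w hw1 hw2
          rcases conc _ _ _ hw1 hw2 with h | h <;> linarith
        · have := big x₂ (by linarith) c2
          linarith
  · -- x₁ is the upper point
    have hs : y₁ + x₁ = 1 + q := by have := key.resolve_left hlt.ne'; linarith
    obtain ⟨g1, g2, g3, g4⟩ := cyc _ _ e1 hy1 hlt hs
    rcases hy with hy | hy
    · have hx := (eqc _ _ (hy.trans hy1.symm)).resolve_left hne
      refine small y₁ ?_ (by linarith) (by linarith) (by linarith)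
      intro w hw1 hw2
      rcases conc _ _ _ hw1 hw2 with h | h <;> linarith
    · rcases sides (by linarith) with h1 | h1
      · rcases le_total y₁ (1 - y₁) with h2 | h2
        · refine small y₁ ?_ (by linarith) h1 (by linarith)
          intro w hw1 hw2
          rcases conc _ _ _ hw1 hw2 with h | h <;> linarith
        · refine small (1 - y₁) ?_ (by rw [sym]; linarith) h1 (by linarith)
          intro w hw1 hw2
          rcases conc _ _ _ hw1 hw2 with h | h <;> linarith
      · rcases lt_or_gt_of_ne hne with h2 | h2
        · have hx3 : x₂ < x₃ ∧ x₃ < x₁ := by rcases ho with h | h <;> constructor <;> linarith [h.1, h.2]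
          have k1 := dn _ _ hx3.1 (by linarith)
          have k2 := dn _ _ hx3.2 (by linarith)
          rcases conc y₁ (f x₃) (1 - y₁) (by linarith) (by linarith) with h | h
          · linarith
          · rw [sym] at h; linarith
        · have k := dn _ _ h2 (by linarith)
          have hh := half _ _ e1 hy1 (by linarith) hlt hs
          have := dn' _ _ c2 (by linarith)
          linarith

/-- For the logistic map `f(k) = α k (1−k)` with `2 < α ≤ 4`, the second iterate
`f ∘ f` is turbulent iff `α > 1 + √5` and `f³(1/2) ≤ (α−1)/α`. -/
theorem logistic_turbulent_iff
    (α : ℝ) (hα₁ : 2 < α) (hα₂ : α ≤ 4)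
    (f : ℝ → ℝ) (hf : ∀ k, f k = α * k * (1 - k)) :
    Turbulent 0 1 (f ∘ f) ↔
      α > 1 + Real.sqrt 5 ∧ f (f (f (1 / 2))) ≤ (α - 1) / α := by
  have q0 : 0 < 1 / α := by positivity
  have hq : α * (1 / α) = 1 := by field_simp
  have hp : (α - 1) / α = 1 - 1 / α := by field_simp
  rw [hp]
  generalize 1 / α = q at *
  have q1 : q < 1 / 2 := by nlinarith
  have h12 : f (1 / 2) = α / 4 := by rw [hf]; ring
  have fp : f (1 - q) = 1 - q := by
    rw [hf]; linear_combination (1 - q) * hq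
  have fq : f q = 1 - q := by
    rw [hf]; linear_combination (1 - q) * hq
  have s5 : Real.sqrt 5 ^ 2 = 5 := Real.sq_sqrt (by norm_num)
  have s50 : 0 ≤ Real.sqrt 5 := Real.sqrt_nonneg 5
  have hd : ∀ u v, f u - f v = α * ((u - v) * (1 - u - v)) := fun u v => by rw [hf, hf]; ring
  rw [h12]
  constructor
  · intro ht
    have hc : f (α / 4) ≤ q := by
      by_contra! h
      exact no_turb α q hα₁ hα₂ hq f hf h ht
    constructor
    · have h1 : f (α / 4) < 1 / 2 := by linarith
      rw [hf] at h1
      have h2 : 0 < (α - 2) * (α ^ 2 - 2 * α - 4) := by nlinarith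
      have h3 : 0 < α ^ 2 - 2 * α - 4 := pos_of_mul_pos_right h2 (by linarith)
      by_contra! h
      nlinarith
    · rw [← fq]
      have := hd q (f (α / 4))
      have : 0 ≤ α * ((q - f (α / 4)) * (1 - q - f (α / 4))) :=
        mul_nonneg (by linarith) (mul_nonneg (by linarith) (by linarith))
      linarith
  · rintro ⟨h1, h2⟩
    have h3 : 0 < α ^ 2 - 2 * α - 4 := by nlinarith
    have h4 : f (α / 4) < 1 / 2 := by
      rw [hf]
      nlinarith [mul_pos (sub_pos.2 hα₁) h3]
    have hc : f (α / 4) ≤ q := by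
      by_contra! h
      have := hd (f (α / 4)) q
      have : 0 < α * ((f (α / 4) - q) * (1 - f (α / 4) - q)) :=
        mul_pos (by linarith) (mul_pos (by linarith) (by linarith))
      linarith
    have hcont : Continuous (f ∘ f) := by
      have : Continuous f := by
        rw [show f = fun k => α * k * (1 - k) from funext hf]; fun_prop
      exact this.comp this
    have hiv := intermediate_value_Icc' q1.le hcont.continuousOn
    obtain ⟨x, ⟨hx1, hx2⟩, hx⟩ := hiv (show q ∈ Set.Icc ((f ∘ f) (1 / 2)) ((f ∘ f) q) by
      simp only [Function.comp, h12, fq, fp]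
      constructor <;> linarith)
    refine ⟨1 - q, ⟨by linarith, by linarith⟩, q, ⟨by linarith, by linarith⟩, x,
      ⟨by linarith, by linarith⟩, by simp [fq, fp], by simp [fp], hx, Or.inr ⟨?_, by linarith⟩⟩
    refine lt_of_le_of_ne hx1 ?_
    rintro rfl
    simp only [Function.comp, fq, fp] at hx
    linarith
end

section
/- Let β = 2 and 9/2 < α ≤ 27/4, and let f(k) = α k (1−k)². Then the set Π = {x ∈ [1/3, 1] : f(x) ∈ [1/3, 1] and f(f(x)) = x} equals the singleton {1 − 1/√α}. -/
/-- For `f(k) = α k (1−k)²` with `9/2 < α ≤ 27/4`, the set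
`Π = {x ∈ [1/3,1] : f(x) ∈ [1/3,1], f(f(x)) = x}` is the singleton
`{1 − 1/√α}`. -/
theorem beta_two_Pi_singleton
    (α : ℝ) (hα₁ : 9 / 2 < α) (hα₂ : α ≤ 27 / 4)
    (f : ℝ → ℝ) (hf : ∀ k, f k = α * k * (1 - k) ^ 2) :
    {x | x ∈ Set.Icc (1 / 3 : ℝ) 1 ∧ f x ∈ Set.Icc (1 / 3 : ℝ) 1 ∧ f (f x) = x} =
      {1 - 1 / Real.sqrt α} := by
  have hα0 : 0 < α := by linarith
  have hs0 : 0 < Real.sqrt α := Real.sqrt_pos.mpr hα0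
  have hsq : Real.sqrt α ^ 2 = α := Real.sq_sqrt hα0.le
  ext x
  simp only [Set.mem_ofPred_eq, Set.mem_Icc, Set.mem_singleton_iff]
  constructor
  · rintro ⟨⟨hx1, hx2⟩, ⟨hy1, hy2⟩, hxy⟩
    obtain ⟨y, hy⟩ : ∃ y, y = f x := ⟨_, rfl⟩
    rw [← hy] at hy1 hy2 hxy
    rw [hf] at hy hxy
    have hx0 : x ≠ 0 := by intro h; linarith
    have hy0 : y ≠ 0 := by intro h; linarith
    have hp2 : (α * (1 - x) * (1 - y)) ^ 2 = 1 := by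
      apply mul_left_cancel₀ (mul_ne_zero hx0 hy0)
      calc x * y * (α * (1 - x) * (1 - y)) ^ 2
          = (α * x * (1 - x) ^ 2) * (α * y * (1 - y) ^ 2) := by ring
        _ = x * y * 1 := by rw [← hy, hxy]; ring
    have hp0 : 0 ≤ α * (1 - x) * (1 - y) :=
      mul_nonneg (mul_nonneg hα0.le (by linarith)) (by linarith)
    have hp : α * (1 - x) * (1 - y) = 1 := by nlinarith
    have hxey : x = y := by
      by_contra hne
      have hd : y - x ≠ 0 := fun h => hne (by linarith)
      have h1 : (2 - x - y) * (1 - (2 - x - y)) = 0 := by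
        apply mul_left_cancel₀ hα0.ne'
        apply mul_left_cancel₀ hd
        linear_combination -hy - hxy - (y - x) * hp
      rcases mul_eq_zero.mp h1 with h | h
      · have hx : x = 1 := by linarith
        rw [hx] at hp
        norm_num at hp
      · have hyx : y = 1 - x := by linarith
        subst hyx
        nlinarith [mul_nonneg (sub_nonneg.mpr hx1) (sub_nonneg.mpr hy1)]
    subst hxey
    have h2 : (Real.sqrt α * (1 - x)) ^ 2 = 1 := by
      rw [mul_pow, hsq]; linarith
    have h3 : 0 ≤ Real.sqrt α * (1 - x) := mul_nonneg hs0.le (by linarith)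
    have h4 : Real.sqrt α * (1 - x) = 1 := by nlinarith
    field_simp
    linarith
  · intro hx
    have hfx : f x = x := by
      have h : α * (1 - x) ^ 2 = 1 := by
        rw [hx, ← hsq, Real.sqrt_sq hs0.le]
        field_simp
        ring
      rw [hf]
      linear_combination x * h
    have hs : 3 / 2 ≤ Real.sqrt α := Real.le_sqrt_of_sq_le (by linarith)
    have hi : 1 / Real.sqrt α ≤ 2 / 3 := by
      rw [div_le_div_iff₀ hs0 (by norm_num)]; linarith
    have hi0 : 0 < 1 / Real.sqrt α := by positivity
    have hI : 1 / 3 ≤ x ∧ x ≤ 1 := ⟨by linarith, by linarith⟩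
    rw [hfx, hfx]
    exact ⟨hI, hI, rfl⟩
end
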